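/- Let p ≥ 2 be an integer, let χ_p(x) = P_{p-1}'(x)(x² − 1), and set γ_p = √(2/(2p−3)) / √(2/(2p+1) + 2/(2p−3)). Then for every real polynomial u of degree at most p−1, |∫_{−1}^{1} u(x) χ_p(x) dx| ≤ γ_p · (∫_{−1}^{1} u(x)² dx)^{1/2} · (∫_{−1}^{1} χ_p(x)² dx)^{1/2}. -/

import Mathlib

open Polynomial

/-- The `n`-th Legendre polynomial, given by the Rodrigues formula
`P_n(x) = 1/(2^n n!) dⁿ/dxⁿ (x² − 1)ⁿ`, normalized so that `P_n(1) = 1`. -/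
noncomputable def legendre (n : ℕ) : Polynomial ℝ :=
  Polynomial.C (1 / (2 ^ n * (n.factorial : ℝ))) *
    (⇑(Polynomial.derivative (R := ℝ)))^[n] ((Polynomial.X ^ 2 - 1) ^ n)

/-- The polynomial `χ_p(x) = P_{p−1}'(x) (x² − 1)`, whose roots are the `p`
Gauss–Lobatto nodes. -/
noncomputable def lobattoChi (p : ℕ) : Polynomial ℝ :=
  Polynomial.derivative (legendre (p - 1)) * (Polynomial.X ^ 2 - 1)

/-!
Legendre's equation `((x² - 1) P_n')' = n (n + 1) P_n` and the recurrence
`P_{n+1}' - P_{n-1}' = (2n + 1) P_n` show that `χ_p` and a multiple of `P_p - P_{p-2}` have the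
same derivative; both vanish at `1`, so they are equal. A polynomial `u` of degree less than `p` is
orthogonal to `P_p`, so only the component of `χ_p` along `P_{p-2}` contributes to `∫ u χ_p`, and
`γ_p` is the ratio of the norm of that component to the norm of `χ_p`.

The norm of `P_n` comes from integrating
`(x P_n²)' = (2n + 1) P_n² + 2 (x P_n' - n P_n) P_n` over `[-1, 1]`: the last term integrates to
zero since `x P_n' - n P_n` has degree less than `n`, and `P_n(±1)² = 1`.
-/

section BilinForm

variable {M : Type*} [AddCommGroup M] [Module ℝ M] {B : LinearMap.BilinForm ℝ M}

lemma abs_bilin_le_sqrt_mul_sqrt (hB : B.IsPosSemidef) (x y : M) :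
    |B x y| ≤ √(B x x) * √(B y y) := by
  rw [← Real.sqrt_mul (hB.nonneg x)]
  exact Real.abs_le_sqrt <|
    B.apply_sq_le_of_symm hB.nonneg (LinearMap.BilinForm.isSymm_iff.mp hB.isSymm) x y

lemma bilin_sub_self_of_apply_eq_zero (hB : B.IsSymm) {f g : M} (hfg : B f g = 0) :
    B (f - g) (f - g) = B f f + B g g := by
  have hgf : B g f = 0 := (hB.eq f g).symm.trans hfg
  simp [hfg, hgf]

lemma abs_bilin_smul_sub_le (hB : B.IsPosSemidef) {u f g : M} (huf : B u f = 0)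
    (hfg : B f g = 0) (c : ℝ) :
    |B u (c • (f - g))| ≤ √(B g g) / √(B f f + B g g) * √(B u u) *
      √(B (c • (f - g)) (c • (f - g))) := by
  have norm_smul_sub : √(B (c • (f - g)) (c • (f - g))) = |c| * √(B f f + B g g) := by
    simp only [map_smul, LinearMap.smul_apply, smul_eq_mul, ← mul_assoc,
      bilin_sub_self_of_apply_eq_zero hB.isSymm hfg]
    rw [Real.sqrt_mul (mul_self_nonneg c), Real.sqrt_mul_self_eq_abs]
  have cancel : √(B g g) / √(B f f + B g g) * √(B f f + B g g) = √(B g g) := by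
    refine div_mul_cancel_of_imp fun h ↦ le_antisymm ?_ (Real.sqrt_nonneg _)
    exact h ▸ Real.sqrt_le_sqrt (le_add_of_nonneg_left (hB.nonneg f))
  calc |B u (c • (f - g))|
    _ = |c| * |B u g| := by simp [huf, abs_mul]
    _ ≤ |c| * (√(B u u) * √(B g g)) := by gcongr; exact abs_bilin_le_sqrt_mul_sqrt hB u g
    _ = _ := by rw [norm_smul_sub]; linear_combination -(|c| * √(B u u)) * cancel

end BilinForm

section PolynomialIntegral

/-- Integration of real polynomials from `a` to `b`, as a linear functional; as for interval
integrals, the sign is reversed when `b < a`. -/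
noncomputable def polynomialIntegral (a b : ℝ) : ℝ[X] →ₗ[ℝ] ℝ where
  toFun f := ∫ x in a..b, f.eval x
  map_add' f g := by
    simp only [eval_add]
    exact intervalIntegral.integral_add (f.continuous.intervalIntegrable a b)
      (g.continuous.intervalIntegrable a b)
  map_smul' c f := by simp

/-- The `L²` inner product of real polynomials on `[a, b]`, as a bilinear form, so that its
positive semidefiniteness (for `a ≤ b`) gives access to the Cauchy–Schwarz inequality. -/
noncomputable def polynomialL2Form (a b : ℝ) : LinearMap.BilinForm ℝ ℝ[X] :=
  (LinearMap.mul ℝ ℝ[X]).compr₂ (polynomialIntegral a b)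

variable {a b : ℝ}

lemma polynomialIntegral_derivative (f : ℝ[X]) :
    polynomialIntegral a b (derivative f) = f.eval b - f.eval a :=
  intervalIntegral.integral_eq_sub_of_hasDerivAt (fun x _ ↦ f.hasDerivAt x)
    ((derivative f).continuous.intervalIntegrable a b)

lemma polynomialL2Form_apply (f g : ℝ[X]) :
    polynomialL2Form a b f g = polynomialIntegral a b (f * g) := rfl

lemma polynomialL2Form_eq_integral (f g : ℝ[X]) :
    polynomialL2Form a b f g = ∫ x in a..b, f.eval x * g.eval x := by
  simp [polynomialL2Form_apply, polynomialIntegral]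

lemma polynomialL2Form_self_eq_integral_sq (f : ℝ[X]) :
    polynomialL2Form a b f f = ∫ x in a..b, f.eval x ^ 2 := by
  simp only [polynomialL2Form_eq_integral, sq]

lemma polynomialL2Form_isPosSemidef (hab : a ≤ b) : (polynomialL2Form a b).IsPosSemidef where
  eq f g := by simp only [polynomialL2Form_apply, mul_comm]
  nonneg f := by
    rw [polynomialL2Form_self_eq_integral_sq]
    exact intervalIntegral.integral_nonneg hab fun x _ ↦ sq_nonneg _

lemma polynomialL2Form_derivative_right {g : ℝ[X]} (ha : g.eval a = 0) (hb : g.eval b = 0)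
    (f : ℝ[X]) :
    polynomialL2Form a b f (derivative g) = -polynomialL2Form a b (derivative f) g := by
  have boundary := polynomialIntegral_derivative (a := a) (b := b) (f * g)
  simp only [derivative_mul, map_add, eval_mul, ha, hb, mul_zero, sub_zero] at boundary
  exact eq_neg_of_add_eq_zero_right boundary

lemma polynomialL2Form_iterate_derivative_right {n : ℕ} {g : ℝ[X]}
    (ha : ∀ k < n, (derivative^[k] g).eval a = 0) (hb : ∀ k < n, (derivative^[k] g).eval b = 0)
    (f : ℝ[X]) :
    polynomialL2Form a b f (derivative^[n] g) =
      (-1) ^ n * polynomialL2Form a b (derivative^[n] f) g := by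
  induction n generalizing f with
  | zero => simp
  | succ n ih =>
    rw [Function.iterate_succ_apply',
      polynomialL2Form_derivative_right (ha n n.lt_succ_self) (hb n n.lt_succ_self),
      ih (fun k hk ↦ ha k (hk.trans n.lt_succ_self)) (fun k hk ↦ hb k (hk.trans n.lt_succ_self)),
      ← Function.iterate_succ_apply]
    ring

end PolynomialIntegral

section Polynomial

lemma eq_of_derivative_eq_of_eval_eq {R : Type*} [CommRing R] [IsAddTorsionFree R] {f g : R[X]}
    (hderiv : derivative f = derivative g) {a : R} (heval : f.eval a = g.eval a) : f = g := by
  have hconst : f - g = C ((f - g).coeff 0) :=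
    eq_C_of_derivative_eq_zero (by rw [derivative_sub, hderiv, sub_self])
  have hzero : (f - g).coeff 0 = 0 := by
    simpa [heval] using (congrArg (eval a) hconst).symm
  rwa [hzero, C_0, sub_eq_zero] at hconst

variable {R : Type*} [CommRing R]

lemma degree_X_mul_derivative_sub_natCast_mul_lt {f : R[X]} {n : ℕ} (hf : f.natDegree ≤ n) :
    degree (X * derivative f - (n : R[X]) * f) < n := by
  rw [degree_lt_iff_coeff_zero]
  rintro (_ | k) hk
  · simp_all
  · rw [coeff_sub, coeff_X_mul, coeff_derivative, coeff_natCast_mul]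
    rcases hk.eq_or_lt with rfl | hlt
    · push_cast; ring
    · simp [coeff_eq_zero_of_natDegree_lt (hf.trans_lt hlt)]

lemma derivative_X_sq_sub_one_pow_succ (n : ℕ) :
    derivative ((X ^ 2 - 1 : R[X]) ^ (n + 1)) = (2 * (n + 1)) • (X * (X ^ 2 - 1 : R[X]) ^ n) := by
  rw [derivative_pow_succ, derivative_sub, derivative_X_sq, derivative_one]
  simp only [nsmul_eq_mul, map_add, map_natCast, map_one, map_ofNat]
  push_cast
  ring

lemma derivative_derivative_X_sq_sub_one_pow_add_two (n : ℕ) :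
    derivative (derivative ((X ^ 2 - 1 : R[X]) ^ (n + 2))) =
      (2 * (n + 2)) • ((2 * n + 3) • (X ^ 2 - 1 : R[X]) ^ (n + 1) +
        (2 * (n + 1)) • (X ^ 2 - 1 : R[X]) ^ n) := by
  rw [derivative_X_sq_sub_one_pow_succ, derivative_smul, derivative_mul, derivative_X,
    derivative_X_sq_sub_one_pow_succ]
  simp only [nsmul_eq_mul]
  push_cast
  ring

lemma X_sq_sub_one_mul_derivative_pow (n : ℕ) :
    (X ^ 2 - 1) * derivative ((X ^ 2 - 1 : R[X]) ^ n) = (2 * n) • (X * (X ^ 2 - 1 : R[X]) ^ n) := by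
  cases n with
  | zero => simp
  | succ n => rw [derivative_X_sq_sub_one_pow_succ, mul_smul_comm, pow_succ]; ring_nf

lemma X_sq_sub_one_pow_eq_mul {r : R} (hr : r ^ 2 = 1) (n : ℕ) :
    (X ^ 2 - 1 : R[X]) ^ n = (X - C r) ^ n * (X + C r) ^ n := by
  rw [← mul_pow, ← C_1, ← hr, C_pow]
  ring

lemma eval_iterate_derivative_X_sq_sub_one_pow_of_lt {r : R} (hr : r ^ 2 = 1) {k n : ℕ}
    (hk : k < n) : (derivative^[k] ((X ^ 2 - 1 : R[X]) ^ n)).eval r = 0 :=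
  aeval_iterate_derivative_of_lt _ n r (map_id.trans (X_sq_sub_one_pow_eq_mul hr n)) hk

lemma eval_iterate_derivative_X_sq_sub_one_pow_self {r : R} (hr : r ^ 2 = 1) (n : ℕ) :
    (derivative^[n] ((X ^ 2 - 1 : R[X]) ^ n)).eval r = n.factorial * (2 * r) ^ n := by
  have h := aeval_iterate_derivative_self _ n r (map_id.trans (X_sq_sub_one_pow_eq_mul hr n))
  simpa [← two_mul] using h

lemma X_sq_sub_one_pow_second_order_eq (n : ℕ) :
    derivative^[2] ((X ^ 2 - 1 : R[X]) ^ n) * X ^ 2 - derivative^[2] ((X ^ 2 - 1 : R[X]) ^ n) +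
        2 • (derivative ((X ^ 2 - 1 : R[X]) ^ n) * X) =
      (2 * n) • ((X ^ 2 - 1 : R[X]) ^ n + derivative ((X ^ 2 - 1 : R[X]) ^ n) * X) := by
  have h := congrArg derivative (X_sq_sub_one_mul_derivative_pow (R := R) n)
  rw [derivative_mul, derivative_sub, derivative_X_sq, derivative_one, derivative_smul,
    derivative_mul, derivative_X, map_ofNat] at h
  simp only [Function.iterate_succ_apply, Function.iterate_zero_apply, nsmul_eq_mul] at h ⊢
  linear_combination h

lemma derivative_X_sq_sub_one_mul_derivative_iterate_derivative (n : ℕ) :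
    derivative ((X ^ 2 - 1) * derivative (derivative^[n] ((X ^ 2 - 1 : R[X]) ^ n))) =
      (n * (n + 1)) • derivative^[n] ((X ^ 2 - 1 : R[X]) ^ n) := by
  have cast_mul_pred : ((n * (n - 1) : ℕ) : R[X]) = n * n - n := by
    cases n with
    | zero => simp
    | succ n => push_cast [Nat.add_sub_cancel]; ring
  have h := congrArg derivative^[n] (X_sq_sub_one_pow_second_order_eq (R := R) n)
  simp only [iterate_map_add, iterate_derivative_sub, iterate_derivative_smul,
    iterate_derivative_derivative_mul_X_sq, iterate_derivative_derivative_mul_X,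
    ← Function.iterate_add_apply] at h
  simp only [nsmul_eq_mul, cast_mul_pred] at h
  simp only [derivative_mul, derivative_sub, derivative_X_sq, derivative_one,
    ← Function.iterate_succ_apply' derivative, nsmul_eq_mul, map_ofNat]
  push_cast at h ⊢
  linear_combination h

end Polynomial

section Legendre

lemma natDegree_legendre_le (n : ℕ) : (legendre n).natDegree ≤ n := by
  have natDegree_pow : ((X ^ 2 - 1 : ℝ[X]) ^ n).natDegree ≤ n * 2 :=
    natDegree_pow_le_of_le n (by compute_degree)
  have natDegree_iterate := natDegree_iterate_derivative ((X ^ 2 - 1 : ℝ[X]) ^ n) n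
  exact (natDegree_C_mul_le _ _).trans (by lia)

lemma eval_legendre_of_sq_eq_one {r : ℝ} (hr : r ^ 2 = 1) (n : ℕ) :
    (legendre n).eval r = r ^ n := by
  rw [legendre, eval_C_mul, eval_iterate_derivative_X_sq_sub_one_pow_self hr, mul_pow]
  field_simp

lemma derivative_X_sq_sub_one_mul_derivative_legendre (n : ℕ) :
    derivative ((X ^ 2 - 1) * derivative (legendre n)) = (n * (n + 1) : ℝ) • legendre n := by
  rw [legendre, derivative_C_mul, mul_left_comm, derivative_C_mul,
    derivative_X_sq_sub_one_mul_derivative_iterate_derivative, smul_eq_C_mul, nsmul_eq_mul]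
  push_cast
  simp only [map_mul, map_add, map_natCast, map_one]
  ring

lemma derivative_legendre_add_two (n : ℕ) :
    derivative (legendre (n + 2)) =
      (2 * n + 3 : ℝ) • legendre (n + 1) + derivative (legendre n) := by
  simp only [legendre, ← smul_eq_C_mul, derivative_smul, ← Function.iterate_succ_apply' derivative]
  rw [Function.iterate_succ_apply, Function.iterate_succ_apply,
    derivative_derivative_X_sq_sub_one_pow_add_two, iterate_derivative_smul, iterate_map_add,
    iterate_derivative_smul, iterate_derivative_smul]
  match_scalars <;> push_cast [Nat.factorial_succ] <;> field_simp <;> ring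

lemma lobattoChi_add_two (n : ℕ) :
    lobattoChi (n + 2) =
      ((n + 1) * (n + 2) / (2 * n + 3) : ℝ) • (legendre (n + 2) - legendre n) := by
  refine eq_of_derivative_eq_of_eval_eq (a := 1) ?_ ?_
  · have h := derivative_X_sq_sub_one_mul_derivative_legendre (n + 1)
    rw [lobattoChi, mul_comm, Nat.add_succ_sub_one, h, derivative_smul, derivative_sub,
      derivative_legendre_add_two, add_sub_cancel_right, smul_smul,
      div_mul_cancel₀ _ (by positivity)]
    push_cast
    ring_nf
  · simp [lobattoChi, eval_legendre_of_sq_eq_one]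

lemma polynomialL2Form_legendre_eq_zero_of_degree_lt {n : ℕ} {u : ℝ[X]} (hu : u.degree < n) :
    polynomialL2Form (-1) 1 u (legendre n) = 0 := by
  have vanish (r : ℝ) (hr : r ^ 2 = 1) (k) (hk : k < n) :=
    eval_iterate_derivative_X_sq_sub_one_pow_of_lt hr hk
  have iterate_u : derivative^[n] u = 0 := iterate_derivative_eq_zero_of_degree_lt hu
  rw [legendre, ← smul_eq_C_mul, map_smul, polynomialL2Form_iterate_derivative_right
    (vanish (-1) (by norm_num)) (vanish 1 (by norm_num)), iterate_u]
  simp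

lemma polynomialL2Form_legendre_self (n : ℕ) :
    polynomialL2Form (-1) 1 (legendre n) (legendre n) = 2 / (2 * n + 1) := by
  have orthogonal := polynomialL2Form_legendre_eq_zero_of_degree_lt
    (degree_X_mul_derivative_sub_natCast_mul_lt (natDegree_legendre_le n))
  have boundary := polynomialIntegral_derivative (a := -1) (b := 1) (X * legendre n ^ 2)
  have decomposition : derivative (X * legendre n ^ 2) =
      (2 * n + 1 : ℝ) • (legendre n * legendre n) +
        (2 : ℝ) • ((X * derivative (legendre n) - (n : ℝ[X]) * legendre n) * legendre n) := by
    simp only [derivative_mul, derivative_X, derivative_sq, smul_eq_C_mul, map_add, map_mul,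
      map_natCast, map_one, map_ofNat]
    ring
  have values : (X * legendre n ^ 2).eval 1 - (X * legendre n ^ 2).eval (-1) = 2 := by
    simp only [eval_mul, eval_X, eval_pow, eval_legendre_of_sq_eq_one, one_pow, neg_one_sq,
      ← pow_mul, (even_two.mul_left n).neg_one_pow]
    norm_num
  rw [decomposition, values, map_add, map_smul, map_smul, ← polynomialL2Form_apply,
    ← polynomialL2Form_apply, orthogonal, smul_zero, add_zero, smul_eq_mul] at boundary
  rw [eq_div_iff (by positivity), mul_comm, boundary]

end Legendre

/-- Improved Cauchy–Schwarz inequality for `χ_p`: with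
`γ_p = √(2/(2p−3)) / √(2/(2p+1) + 2/(2p−3))`, every polynomial `u` of degree at most
`p − 1` satisfies `|∫_{−1}^{1} u χ_p| ≤ γ_p ‖u‖_{L²} ‖χ_p‖_{L²}`. -/
theorem inner_lobattoChi_improved_cauchy_schwarz (p : ℕ) (hp : 2 ≤ p)
    (u : Polynomial ℝ) (hu : u.natDegree ≤ p - 1) :
    |∫ x in (-1 : ℝ)..1, u.eval x * (lobattoChi p).eval x| ≤
      (Real.sqrt (2 / (2 * (p : ℝ) - 3)) /
          Real.sqrt (2 / (2 * (p : ℝ) + 1) + 2 / (2 * (p : ℝ) - 3))) *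
        Real.sqrt (∫ x in (-1 : ℝ)..1, u.eval x ^ 2) *
        Real.sqrt (∫ x in (-1 : ℝ)..1, (lobattoChi p).eval x ^ 2) := by
  obtain ⟨n, rfl⟩ := Nat.exists_eq_add_of_le' hp
  have hB := polynomialL2Form_isPosSemidef (neg_le_self zero_le_one : (-1 : ℝ) ≤ 1)
  have orthogonal {v : ℝ[X]} (hv : v.natDegree < n + 2) :
      polynomialL2Form (-1) 1 v (legendre (n + 2)) = 0 :=
    polynomialL2Form_legendre_eq_zero_of_degree_lt
      (degree_le_natDegree.trans_lt (Nat.cast_lt.mpr hv))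
  have improved := abs_bilin_smul_sub_le hB (orthogonal (by lia : u.natDegree < n + 2))
    (hB.isSymm.isRefl _ _ (orthogonal ((natDegree_legendre_le n).trans_lt (by lia))))
    ((n + 1) * (n + 2) / (2 * n + 3))
  have cast_eq : (2 * (n + 2 : ℕ) - 3 : ℝ) = 2 * n + 1 := by push_cast; ring
  rwa [← lobattoChi_add_two, polynomialL2Form_legendre_self, polynomialL2Form_legendre_self,
    polynomialL2Form_eq_integral, polynomialL2Form_self_eq_integral_sq,
    polynomialL2Form_self_eq_integral_sq, ← cast_eq] at improved
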